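/- arXiv:math/0402085 — 3 statements merged into one kernel-verified Lean document; each statement's English description precedes it below -/
import Mathlib

section
/- As $T \to \infty$, the number of subgroups $H \subseteq \mathbb{Z}^k$ with $[\mathbb{Z}^k:H] \le T$ is asymptotic to $\zeta(2)\zeta(3)\cdots\zeta(k)\, T^k/k$, for $k \ge 1$. -/
open Filter

/-- Index splits along the exact sequence `A → A × ℤ → ℤ`. -/
lemma idx_split {A : Type*} [AddCommGroup A] (H : AddSubgroup (A × ℤ)) :
    H.index = (H.comap (AddMonoidHom.inl A ℤ)).index * (H.map (AddMonoidHom.snd A ℤ)).index := by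
  have hk : (AddMonoidHom.snd A ℤ).ker = (AddMonoidHom.inl A ℤ).range := by
    ext ⟨a, z⟩
    rw [AddMonoidHom.mem_ker, AddMonoidHom.mem_range]
    constructor
    · intro h; exact ⟨a, Prod.ext rfl h.symm⟩
    · rintro ⟨b, hb⟩; rw [← hb]; rfl
  have hr : (AddMonoidHom.snd A ℤ).range.index = 1 := by
    rw [AddMonoidHom.range_eq_top.2 (fun z => ⟨(0, z), rfl⟩)]
    exact AddSubgroup.index_top
  rw [AddSubgroup.index_map, hr, mul_one, AddSubgroup.index_comap, hk,
    ← AddSubgroup.relIndex_sup_left, AddSubgroup.relIndex_mul_index le_sup_left]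

/-- The subgroup of `A × ℤ` attached to `H ≤ A`, a class `q ∈ A / H` and `e`. -/
def mkSub {A : Type*} [AddCommGroup A] (H : AddSubgroup A) (q : A ⧸ H) (e : ℕ) :
    AddSubgroup (A × ℤ) where
  carrier := {x | ∃ t : ℤ, x.2 = t * e ∧ (QuotientAddGroup.mk x.1 : A ⧸ H) = t • q}
  zero_mem' := ⟨0, by simp, by simp⟩
  add_mem' := by
    rintro x y ⟨t, h1, h2⟩ ⟨s, h3, h4⟩
    exact ⟨t + s, by simp [h1, h3, add_mul], by simp [h2, h4, add_smul]⟩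
  neg_mem' := by
    rintro x ⟨t, h1, h2⟩
    exact ⟨-t, by simp [h1], by simp [h2]⟩

lemma mem_mkSub {A : Type*} [AddCommGroup A] (H : AddSubgroup A) (q : A ⧸ H) (e : ℕ) (x : A × ℤ) :
    x ∈ mkSub H q e ↔ ∃ t : ℤ, x.2 = t * e ∧ (QuotientAddGroup.mk x.1 : A ⧸ H) = t • q := Iff.rfl

lemma comap_mkSub {A : Type*} [AddCommGroup A] (H : AddSubgroup A) (q : A ⧸ H) (e : ℕ)
    (he : 0 < e) : (mkSub H q e).comap (AddMonoidHom.inl A ℤ) = H := by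
  ext a
  simp only [AddSubgroup.mem_comap, mem_mkSub, AddMonoidHom.inl_apply]
  constructor
  · rintro ⟨t, h1, h2⟩
    have : t = 0 := by
      have he' : (e : ℤ) ≠ 0 := by positivity
      rcases mul_eq_zero.1 h1.symm with h | h
      · exact h
      · exact absurd h he'
    subst this
    simpa using h2
  · intro h
    exact ⟨0, by simp, by simpa using h⟩

lemma map_mkSub {A : Type*} [AddCommGroup A] (H : AddSubgroup A) (q : A ⧸ H) (e : ℕ) :
    (mkSub H q e).map (AddMonoidHom.snd A ℤ) = AddSubgroup.zmultiples (e : ℤ) := by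
  ext z
  simp only [AddSubgroup.mem_map, mem_mkSub, AddSubgroup.mem_zmultiples_iff]
  constructor
  · rintro ⟨x, ⟨t, h1, h2⟩, rfl⟩
    exact ⟨t, by simp [h1]⟩
  · rintro ⟨t, rfl⟩
    obtain ⟨a, ha⟩ := QuotientAddGroup.mk_surjective (t • q)
    exact ⟨(a, t • (e : ℤ)), ⟨t, by simp, ha⟩, rfl⟩

lemma index_mkSub {A : Type*} [AddCommGroup A] (H : AddSubgroup A) (q : A ⧸ H) (e : ℕ)
    (he : 0 < e) : (mkSub H q e).index = H.index * e := by
  rw [idx_split, comap_mkSub H q e he, map_mkSub, Int.index_zmultiples]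
  simp

lemma mkSub_inj_q {A : Type*} [AddCommGroup A] (H : AddSubgroup A) (q q' : A ⧸ H) (e : ℕ)
    (he : 0 < e) (h : mkSub H q e = mkSub H q' e) : q = q' := by
  obtain ⟨a, rfl⟩ := QuotientAddGroup.mk_surjective q
  have h1 : (a, (e : ℤ)) ∈ mkSub H (QuotientAddGroup.mk a) e := ⟨1, by simp, by simp⟩
  rw [h] at h1
  obtain ⟨t, h2, h3⟩ := h1
  have he' : (e : ℤ) ≠ 0 := by positivity
  have : t = 1 := by
    have : (t - 1) * (e : ℤ) = 0 := by simp at h2; linarith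
    rcases mul_eq_zero.1 this with h | h
    · linarith
    · exact absurd h he'
  subst this
  simpa using h3

lemma mkSub_surj {A : Type*} [AddCommGroup A] (K : AddSubgroup (A × ℤ)) (hK : K.index ≠ 0) :
    ∃ (H : AddSubgroup A) (q : A ⧸ H) (e : ℕ), 0 < e ∧ mkSub H q e = K := by
  obtain ⟨g, hg⟩ := Int.subgroup_cyclic (K.map (AddMonoidHom.snd A ℤ))
  rw [← AddSubgroup.zmultiples_eq_closure] at hg
  have hz : K.map (AddMonoidHom.snd A ℤ) = AddSubgroup.zmultiples (g.natAbs : ℤ) := by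
    rw [hg, Int.zmultiples_natAbs]
  have hg0 : 0 < g.natAbs := by
    rw [Nat.pos_iff_ne_zero]
    intro h
    apply hK
    rw [idx_split, hg, Int.index_zmultiples, h, mul_zero]
  have hmem : (g.natAbs : ℤ) ∈ K.map (AddMonoidHom.snd A ℤ) := by
    rw [hz]; exact AddSubgroup.mem_zmultiples _
  obtain ⟨⟨a, z⟩, hx, hxz⟩ := hmem
  simp only [AddMonoidHom.coe_snd] at hxz
  subst hxz
  refine ⟨K.comap (AddMonoidHom.inl A ℤ), QuotientAddGroup.mk a, g.natAbs, hg0, ?_⟩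
  have key : ∀ (b : A) (t : ℤ), (QuotientAddGroup.mk b : A ⧸ K.comap (AddMonoidHom.inl A ℤ))
      = t • QuotientAddGroup.mk a ↔ (b, t * (g.natAbs : ℤ)) ∈ K := by
    intro b t
    rw [← QuotientAddGroup.mk_zsmul, eq_comm, QuotientAddGroup.eq, AddSubgroup.mem_comap]
    have h2 : t • (a, (g.natAbs : ℤ)) ∈ K := K.zsmul_mem hx t
    rw [← K.add_mem_cancel_left h2]
    simp
  ext ⟨b, z⟩
  rw [mem_mkSub]
  constructor
  · rintro ⟨t, h1, h2⟩
    simp only at h1 h2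
    rw [h1]; exact (key b t).1 h2
  · intro h
    have : z ∈ K.map (AddMonoidHom.snd A ℤ) := ⟨_, h, rfl⟩
    rw [hz, AddSubgroup.mem_zmultiples_iff] at this
    obtain ⟨t, ht⟩ := this
    rw [smul_eq_mul] at ht
    exact ⟨t, ht.symm, (key b t).2 (ht ▸ h)⟩

/-- Number of subgroups of index `n`. -/
noncomputable def subCount (A : Type*) [AddCommGroup A] (n : ℕ) : ℕ :=
  Nat.card {H : AddSubgroup A // H.index = n}

/-- The fibration of subgroups of `A × ℤ`. -/
def fibMap (A : Type*) [AddCommGroup A] (n : ℕ) (hn : n ≠ 0) :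
    (Σ p : {p // p ∈ n.divisorsAntidiagonal}, Σ H : {H : AddSubgroup A // H.index = p.1.2}, A ⧸ H.1) →
      {K : AddSubgroup (A × ℤ) // K.index = n} :=
  fun x => ⟨mkSub x.2.1.1 x.2.2 x.1.1.1, by
    have h := Nat.mem_divisorsAntidiagonal.1 x.1.2
    rw [index_mkSub _ _ _ (Nat.pos_of_ne_zero fun h0 => hn (by rw [← h.1, h0, zero_mul])),
      x.2.1.2, mul_comm, h.1]⟩

lemma fibMap_bij (A : Type*) [AddCommGroup A] (n : ℕ) (hn : n ≠ 0) :
    Function.Bijective (fibMap A n hn) := by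
  constructor
  · rintro ⟨⟨⟨e, d⟩, hp⟩, ⟨H, hH⟩, q⟩ ⟨⟨⟨e', d'⟩, hp'⟩, ⟨H', hH'⟩, q'⟩ h
    have h' : mkSub H q e = mkSub H' q' e' := congrArg Subtype.val h
    have hpe := Nat.mem_divisorsAntidiagonal.1 hp
    have hpe' := Nat.mem_divisorsAntidiagonal.1 hp'
    simp only at hpe hpe' hH hH'
    have he : 0 < e := Nat.pos_of_ne_zero fun h0 => hn (by rw [← hpe.1, h0, zero_mul])
    have he' : 0 < e' := Nat.pos_of_ne_zero fun h0 => hn (by rw [← hpe'.1, h0, zero_mul])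
    have hee : e = e' := by
      have := congrArg (fun K => (K.map (AddMonoidHom.snd A ℤ)).index) h'
      simpa [map_mkSub, Int.index_zmultiples] using this
    subst hee
    have hHH : H = H' := by
      rw [← comap_mkSub H q e he, h', comap_mkSub H' q' e he]
    subst hHH
    have hdd : d = d' := by rw [← hH, ← hH']
    subst hdd
    have := mkSub_inj_q H q q' e he h'
    subst this
    rfl
  · rintro ⟨K, hK⟩
    obtain ⟨H, q, e, he, rfl⟩ := mkSub_surj K (by rw [hK]; exact hn)
    rw [index_mkSub _ _ _ he] at hK
    exact ⟨⟨⟨(e, H.index), Nat.mem_divisorsAntidiagonal.2 ⟨by rw [mul_comm]; exact hK, hn⟩⟩,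
      ⟨H, rfl⟩, q⟩, rfl⟩

/-- finiteness -/
def FinSub (A : Type*) [AddCommGroup A] : Prop :=
  ∀ n : ℕ, n ≠ 0 → Finite {H : AddSubgroup A // H.index = n}

lemma finite_quot {A : Type*} [AddCommGroup A] {n : ℕ} (hn : n ≠ 0)
    (H : {H : AddSubgroup A // H.index = n}) : Finite (A ⧸ H.1) := by
  have := H.2
  apply Nat.finite_of_card_ne_zero
  change H.1.index ≠ 0
  omega

lemma snd_ne {n : ℕ} (p : {p // p ∈ n.divisorsAntidiagonal}) : p.1.2 ≠ 0 := by
  have h := Nat.mem_divisorsAntidiagonal.1 p.2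
  intro h0
  apply h.2
  rw [← h.1, h0, mul_zero]

lemma finSub_prod {A : Type*} [AddCommGroup A] (h : FinSub A) : FinSub (A × ℤ) := by
  intro n hn
  have h1 : ∀ p : {p // p ∈ n.divisorsAntidiagonal},
    Finite {H : AddSubgroup A // H.index = p.1.2} := fun p => h _ (snd_ne p)
  have h2 : ∀ p : {p // p ∈ n.divisorsAntidiagonal},
    ∀ H : {H : AddSubgroup A // H.index = p.1.2}, Finite (A ⧸ H.1) :=
    fun p H => finite_quot (snd_ne p) H
  exact Finite.of_surjective _ (fibMap_bij A n hn).2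

lemma subCount_prod {A : Type*} [AddCommGroup A] (h : FinSub A) (n : ℕ) (hn : n ≠ 0) :
    subCount (A × ℤ) n = ∑ p ∈ n.divisorsAntidiagonal, p.2 * subCount A p.2 := by
  have h1 : ∀ p : {p // p ∈ n.divisorsAntidiagonal},
    Finite {H : AddSubgroup A // H.index = p.1.2} := fun p => h _ (snd_ne p)
  have h2 : ∀ p : {p // p ∈ n.divisorsAntidiagonal},
    ∀ H : {H : AddSubgroup A // H.index = p.1.2}, Finite (A ⧸ H.1) :=
    fun p H => finite_quot (snd_ne p) H
  unfold subCount
  rw [← Nat.card_congr (Equiv.ofBijective _ (fibMap_bij A n hn)), Nat.card_sigma,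
    ← Finset.sum_coe_sort n.divisorsAntidiagonal
      (fun p => p.2 * Nat.card {H : AddSubgroup A // H.index = p.2})]
  refine Finset.sum_congr rfl fun p _ => ?_
  have := Fintype.ofFinite {H : AddSubgroup A // H.index = p.1.2}
  rw [Nat.card_sigma, Finset.sum_congr rfl (fun H _ => (H.2 : Nat.card (A ⧸ H.1) = p.1.2))]
  simp [mul_comm]

/-- Subgroups of isomorphic groups. -/
def subEquiv {A B : Type*} [AddCommGroup A] [AddCommGroup B] (f : A ≃+ B) (n : ℕ) :
    {H : AddSubgroup A // H.index = n} ≃ {H : AddSubgroup B // H.index = n} :=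
  (f.mapAddSubgroup.toEquiv).subtypeEquiv (fun H => by
    have := AddSubgroup.index_map_equiv H f
    constructor
    · intro h; rw [← h, ← this]; rfl
    · intro h; rw [← h, ← this]; rfl)

def finSuccIso (k : ℕ) : ((Fin k → ℤ) × ℤ) ≃+ (Fin (k + 1) → ℤ) where
  toFun x := Fin.cons x.2 x.1
  invFun y := (Fin.tail y, y 0)
  left_inv x := by simp
  right_inv y := by simp
  map_add' x y := by
    ext i
    refine Fin.cases ?_ (fun i => ?_) i <;> simp

lemma finSub_fin (k : ℕ) : FinSub (Fin k → ℤ) := by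
  induction k with
  | zero => intro n _; infer_instance
  | succ k ih =>
    intro n hn
    have := finSub_prod ih n hn
    exact Finite.of_equiv _ (subEquiv (finSuccIso k) n)

lemma subCount_succ (k n : ℕ) (hn : n ≠ 0) : subCount (Fin (k + 1) → ℤ) n =
    ∑ p ∈ n.divisorsAntidiagonal, p.2 * subCount (Fin k → ℤ) p.2 := by
  rw [← subCount_prod (finSub_fin k) n hn]
  exact (Nat.card_congr (subEquiv (finSuccIso k) n)).symm

lemma subCount_zero (n : ℕ) : subCount (Fin 0 → ℤ) n = if n = 1 then 1 else 0 := by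
  have h : ∀ H : AddSubgroup (Fin 0 → ℤ), H.index = 1 := fun H => by
    rw [Subsingleton.elim H ⊤]; simp
  unfold subCount
  split_ifs with hn
  · subst hn
    have : Unique {H : AddSubgroup (Fin 0 → ℤ) // H.index = 1} :=
      ⟨⟨⟨⊤, h _⟩⟩, fun H => Subsingleton.elim _ _⟩
    exact Nat.card_unique
  · have : IsEmpty {H : AddSubgroup (Fin 0 → ℤ) // H.index = n} :=
      ⟨fun H => hn (by rw [← H.2, h])⟩
    exact Nat.card_of_isEmpty

lemma subCount_one (n : ℕ) (hn : n ≠ 0) : subCount (Fin 1 → ℤ) n = 1 := by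
  rw [subCount_succ 0 n hn, Finset.sum_eq_single (n, 1)]
  · simp [subCount_zero]
  · rintro ⟨e, d⟩ h hne
    have h := (Nat.mem_divisorsAntidiagonal.1 h).1
    rw [subCount_zero]
    split_ifs with h1
    · simp only at h1 h
      subst h1
      simp at h
      exact absurd (by rw [h]) hne
    · simp
  · intro h
    exact absurd (Nat.mem_divisorsAntidiagonal.2 ⟨by simp, hn⟩) h

lemma ncard_eq (k : ℕ) (T : ℝ) :
    {H : AddSubgroup (Fin k → ℤ) | 0 < H.index ∧ (H.index : ℝ) ≤ T}.ncard =
      ∑ n ∈ Finset.Ioc 0 ⌊T⌋₊, subCount (Fin k → ℤ) n := by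
  have h1 : ∀ p : {p // p ∈ Finset.Ioc 0 ⌊T⌋₊},
    Finite {H : AddSubgroup (Fin k → ℤ) // H.index = p.1} := fun p =>
      finSub_fin k _ (by have := (Finset.mem_Ioc.1 p.2).1; omega)
  unfold subCount
  rw [← Finset.sum_coe_sort (Finset.Ioc 0 ⌊T⌋₊)
    (fun n => Nat.card {H : AddSubgroup (Fin k → ℤ) // H.index = n}), ← Nat.card_sigma,
    ← Nat.card_coe_set_eq]
  have hm : ∀ H : AddSubgroup (Fin k → ℤ), (0 < H.index ∧ (H.index : ℝ) ≤ T) ↔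
      H.index ∈ Finset.Ioc 0 ⌊T⌋₊ := fun H => by
    rw [Finset.mem_Ioc]
    refine and_congr_right fun h => ?_
    rw [Nat.le_floor_iff' h.ne']
  exact Nat.card_congr
    { toFun := fun H => ⟨⟨H.1.index, (hm H.1).1 H.2⟩, ⟨H.1, rfl⟩⟩
      invFun := fun x => ⟨x.2.1, (hm _).2 (by rw [x.2.2]; exact x.1.2)⟩
      left_inv := fun H => rfl
      right_inv := by
        rintro ⟨⟨n, hn⟩, ⟨H, hH⟩⟩
        change H.index = n at hH
        subst hH
        rfl }

/-- Weighted summatory function. -/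
noncomputable def wsum (c : ℕ → ℝ) (j : ℕ) (T : ℝ) : ℝ :=
  ∑ n ∈ Finset.Ioc 0 ⌊T⌋₊, (n : ℝ) ^ j * c n

lemma wsum_nonneg (c : ℕ → ℝ) (hc : ∀ n, 0 ≤ c n) (j : ℕ) (T : ℝ) : 0 ≤ wsum c j T :=
  Finset.sum_nonneg fun n _ => mul_nonneg (by positivity) (hc n)

lemma wsum_mono (c : ℕ → ℝ) (hc : ∀ n, 0 ≤ c n) (j : ℕ) : Monotone (wsum c j) := by
  intro S T h
  refine Finset.sum_le_sum_of_subset_of_nonneg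
    (Finset.Ioc_subset_Ioc_right (Nat.floor_mono h)) fun n _ _ => mul_nonneg (by positivity) (hc n)

lemma wsum_lt_one (c : ℕ → ℝ) (j : ℕ) (T : ℝ) (h : T < 1) : wsum c j T = 0 := by
  unfold wsum
  rw [Nat.floor_eq_zero.2 h]
  simp

lemma wsum_bdd (c : ℕ → ℝ) (hc : ∀ n, 0 ≤ c n) (j m : ℕ) (L : ℝ)
    (hL : Tendsto (fun T => wsum c j T / T ^ m) atTop (nhds L)) :
    ∃ M, ∀ T : ℝ, 0 ≤ T → |wsum c j T / T ^ m| ≤ M := by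
  have h1 : ∀ᶠ T in atTop, wsum c j T / T ^ m < L + 1 := hL.eventually_lt_const (by linarith)
  obtain ⟨X, hX⟩ := eventually_atTop.1 h1
  refine ⟨max (L + 1) (wsum c j X), fun T hT => ?_⟩
  rw [abs_of_nonneg (div_nonneg (wsum_nonneg c hc j T) (by positivity))]
  rcases lt_or_ge T 1 with h | h
  · rw [wsum_lt_one c j T h, zero_div]
    exact le_max_of_le_right (wsum_nonneg c hc j X)
  · rcases le_total X T with h2 | h2
    · exact le_max_of_le_left (hX T h2).le
    · refine le_max_of_le_right ?_
      exact (div_le_self (wsum_nonneg c hc j T) (one_le_pow₀ h)).trans (wsum_mono c hc j h2)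

lemma wsum_conv (c c' : ℕ → ℝ) (j : ℕ)
    (hcc : ∀ n, n ≠ 0 → c' n = ∑ p ∈ n.divisorsAntidiagonal, (p.2 : ℝ) * c p.2) (T : ℝ) :
    wsum c' j T = ∑ e ∈ Finset.Ioc 0 ⌊T⌋₊, (e : ℝ) ^ j * wsum c (j + 1) (T / e) := by
  let f : ArithmeticFunction ℝ := ⟨fun e => if e = 0 then 0 else (e : ℝ) ^ j, by simp⟩
  let g : ArithmeticFunction ℝ := ⟨fun d => (d : ℝ) ^ (j + 1) * c d, by simp⟩
  have key := ArithmeticFunction.sum_Ioc_mul_eq_sum_sum f g ⌊T⌋₊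
  have hl : wsum c' j T = ∑ n ∈ Finset.Ioc 0 ⌊T⌋₊, (f * g) n := by
    refine Finset.sum_congr rfl fun n hn => ?_
    have hn0 : n ≠ 0 := by have := (Finset.mem_Ioc.1 hn).1; omega
    rw [ArithmeticFunction.mul_apply, hcc n hn0, Finset.mul_sum]
    refine Finset.sum_congr rfl fun p hp => ?_
    have h := (Nat.mem_divisorsAntidiagonal.1 hp).1
    have hp0 : p.1 ≠ 0 := fun h0 => hn0 (by rw [← h, h0, zero_mul])
    change _ = (if p.1 = 0 then 0 else (p.1 : ℝ) ^ j) * ((p.2 : ℝ) ^ (j + 1) * c p.2)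
    rw [if_neg hp0, ← h]
    push_cast
    ring
  rw [hl, key]
  refine Finset.sum_congr rfl fun e he => ?_
  have he0 : e ≠ 0 := by have := (Finset.mem_Ioc.1 he).1; omega
  change (if e = 0 then 0 else (e : ℝ) ^ j) * _ = _
  rw [if_neg he0, wsum, Nat.floor_div_natCast]
  rfl

lemma wsum_step (c c' : ℕ → ℝ) (hc : ∀ n, 0 ≤ c n) (j k : ℕ) (hk : 1 ≤ k) (L : ℝ)
    (hcc : ∀ n, n ≠ 0 → c' n = ∑ p ∈ n.divisorsAntidiagonal, (p.2 : ℝ) * c p.2)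
    (hL : Tendsto (fun T => wsum c (j + 1) T / T ^ (k + (j + 1))) atTop (nhds L)) :
    Tendsto (fun T => wsum c' j T / T ^ (k + 1 + j)) atTop
      (nhds ((∑' e : ℕ, 1 / (e : ℝ) ^ (k + 1)) * L)) := by
  obtain ⟨M, hM⟩ := wsum_bdd c hc (j + 1) _ L hL
  have hs : Summable fun e : ℕ => 1 / (e : ℝ) ^ (k + 1) :=
    Real.summable_one_div_nat_pow.2 (by omega)
  rw [← tsum_mul_right]
  have hmain : Tendsto (fun T : ℝ => ∑' e : ℕ, 1 / (e : ℝ) ^ (k + 1) *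
      (wsum c (j + 1) (T / e) / (T / e) ^ (k + (j + 1)))) atTop
      (nhds (∑' e : ℕ, 1 / (e : ℝ) ^ (k + 1) * L)) := by
    refine tendsto_tsum_of_dominated_convergence (bound := fun e : ℕ => 1 / (e : ℝ) ^ (k + 1) * M)
      (hs.mul_right M) ?_ ?_
    · intro e
      rcases Nat.eq_zero_or_pos e with rfl | he
      · simp
      · refine Tendsto.const_mul _ ?_
        exact hL.comp (tendsto_id.atTop_div_const (by positivity))
    · filter_upwards [eventually_ge_atTop 0] with T hT e
      rw [norm_mul, Real.norm_of_nonneg (by positivity : (0:ℝ) ≤ 1 / (e : ℝ) ^ (k + 1))]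
      exact mul_le_mul_of_nonneg_left (hM _ (by positivity)) (by positivity)
  refine hmain.congr' ?_
  filter_upwards [eventually_gt_atTop 0] with T hT
  rw [wsum_conv c c' j hcc T, tsum_eq_sum (s := Finset.Ioc 0 ⌊T⌋₊), Finset.sum_div]
  · refine Finset.sum_congr rfl fun e he => ?_
    have he0 : (0 : ℝ) < e := by exact_mod_cast (Finset.mem_Ioc.1 he).1
    rw [div_pow, show k + (j + 1) = k + 1 + j by ring]
    field_simp
    ring
  · intro e he
    rcases Nat.eq_zero_or_pos e with rfl | h0
    · simp
    · have h1 : ⌊T⌋₊ < e := by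
        by_contra h
        exact he (Finset.mem_Ioc.2 ⟨h0, not_lt.1 h⟩)
      rw [wsum_lt_one, zero_div, mul_zero]
      have he0 : (0 : ℝ) < e := by exact_mod_cast h0
      rw [div_lt_one he0]
      exact (Nat.floor_lt hT.le).1 h1

lemma pow_succ_diff (x : ℝ) (hx : 0 ≤ x) (j : ℕ) :
    (j + 1) * x ^ j ≤ (x + 1) ^ (j + 1) - x ^ (j + 1) ∧
    (x + 1) ^ (j + 1) - x ^ (j + 1) ≤ (j + 1) * (x + 1) ^ j := by
  induction j with
  | zero => simp
  | succ j ih =>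
    obtain ⟨h1, h2⟩ := ih
    have hm : x ^ (j + 1) ≤ (x + 1) ^ (j + 1) := pow_le_pow_left₀ hx (by linarith) _
    have e1 : (x + 1) ^ (j + 1 + 1) - x ^ (j + 1 + 1) =
      x * ((x + 1) ^ (j + 1) - x ^ (j + 1)) + (x + 1) ^ (j + 1) := by ring
    have e2 : (x + 1) ^ (j + 1 + 1) - x ^ (j + 1 + 1) =
      (x + 1) * ((x + 1) ^ (j + 1) - x ^ (j + 1)) + x ^ (j + 1) := by ring
    have a1 := mul_le_mul_of_nonneg_left h1 hx
    have a2 := mul_le_mul_of_nonneg_left h2 (by linarith : 0 ≤ x + 1)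
    constructor
    · rw [e1]; push_cast
      have : x * ((j + 1) * x ^ j) = (j + 1) * x ^ (j + 1) := by ring
      nlinarith
    · rw [e2]; push_cast
      have : (x + 1) * ((j + 1) * (x + 1) ^ j) = (j + 1) * (x + 1) ^ (j + 1) := by ring
      nlinarith

lemma sum_pow_bounds (j N : ℕ) :
    (N : ℝ) ^ (j + 1) ≤ (j + 1) * ∑ n ∈ Finset.Ioc 0 N, (n : ℝ) ^ j ∧
    (j + 1) * ∑ n ∈ Finset.Ioc 0 N, (n : ℝ) ^ j ≤ ((N : ℝ) + 1) ^ (j + 1) := by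
  induction N with
  | zero => simp
  | succ N ih =>
    obtain ⟨h1, h2⟩ := ih
    have hs : ∑ n ∈ Finset.Ioc 0 (N + 1), (n : ℝ) ^ j =
        ∑ n ∈ Finset.Ioc 0 N, (n : ℝ) ^ j + ((N : ℝ) + 1) ^ j := by
      rw [Finset.sum_Ioc_succ_top (by omega)]; push_cast; rfl
    have a := (pow_succ_diff (N : ℝ) (by positivity) j).2
    have b := (pow_succ_diff ((N : ℝ) + 1) (by positivity) j).1
    rw [hs]
    push_cast
    constructor <;> linarith

lemma wsum_base (c : ℕ → ℝ) (hc : ∀ n, n ≠ 0 → c n = 1) (j : ℕ) :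
    Tendsto (fun T => wsum c j T / T ^ (1 + j)) atTop (nhds (1 / (1 + j : ℝ))) := by
  have hw : ∀ T, wsum c j T = ∑ n ∈ Finset.Ioc 0 ⌊T⌋₊, (n : ℝ) ^ j := fun T =>
    Finset.sum_congr rfl fun n hn => by
      rw [hc n (by have := (Finset.mem_Ioc.1 hn).1; omega), mul_one]
  have hf : Tendsto (fun T : ℝ => (⌊T⌋₊ : ℝ) / T) atTop (nhds 1) := tendsto_nat_floor_div_atTop
  have hi : Tendsto (fun T : ℝ => (1 : ℝ) / T) atTop (nhds 0) := tendsto_const_nhds.div_atTop tendsto_id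
  have hlo : Tendsto (fun T : ℝ => ((⌊T⌋₊ : ℝ) / T) ^ (1 + j) / (1 + j : ℝ)) atTop
      (nhds (1 / (1 + j : ℝ))) := by
    simpa using (hf.pow (1 + j)).div_const (1 + j : ℝ)
  have hhi : Tendsto (fun T : ℝ => ((⌊T⌋₊ : ℝ) / T + 1 / T) ^ (1 + j) / (1 + j : ℝ)) atTop
      (nhds (1 / (1 + j : ℝ))) := by
    simpa using ((hf.add hi).pow (1 + j)).div_const (1 + j : ℝ)
  refine tendsto_of_tendsto_of_tendsto_of_le_of_le' hlo hhi ?_ ?_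
  · filter_upwards [eventually_gt_atTop 0] with T hT
    have h := (sum_pow_bounds j ⌊T⌋₊).1
    rw [hw, div_pow, div_div, mul_comm, ← div_div, add_comm 1 j]
    gcongr
    rw [div_le_iff₀ (by positivity)]
    linarith
  · filter_upwards [eventually_gt_atTop 0] with T hT
    have h := (sum_pow_bounds j ⌊T⌋₊).2
    rw [hw, ← add_div, div_pow, div_div, mul_comm (T ^ _), ← div_div, add_comm 1 j]
    gcongr
    rw [le_div_iff₀ (by positivity)]
    linarith

lemma zeta_re (k : ℕ) (hk : 1 < k) : (riemannZeta (k : ℂ)).re = ∑' e : ℕ, 1 / (e : ℝ) ^ k := by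
  rw [zeta_nat_eq_tsum_of_gt_one hk]
  have : (∑' n : ℕ, 1 / (n : ℂ) ^ k) = ((∑' e : ℕ, 1 / (e : ℝ) ^ k : ℝ) : ℂ) := by
    push_cast; rfl
  rw [this, Complex.ofReal_re]

lemma zeta_re_pos (k : ℕ) (hk : 1 < k) : 0 < (riemannZeta (k : ℂ)).re := by
  rw [zeta_re k hk]
  exact (Real.summable_one_div_nat_pow.2 hk).tsum_pos (fun e => by positivity) 1 (by simp)

lemma main_asymp (k : ℕ) (hk : 1 ≤ k) : ∀ j : ℕ,
    Tendsto (fun T => wsum (fun n => (subCount (Fin k → ℤ) n : ℝ)) j T / T ^ (k + j)) atTop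
      (nhds ((∏ i ∈ Finset.Icc 2 k, (riemannZeta (i : ℂ)).re) / (k + j : ℝ))) := by
  induction k, hk using Nat.le_induction with
  | base =>
    intro j
    have := wsum_base (fun n => (subCount (Fin 1 → ℤ) n : ℝ))
      (fun n hn => by rw [subCount_one n hn]; simp) j
    simpa using this
  | succ k hk ih =>
    intro j
    have := wsum_step (fun n => (subCount (Fin k → ℤ) n : ℝ))
      (fun n => (subCount (Fin (k + 1) → ℤ) n : ℝ)) (fun n => by positivity) j k hk _
      (fun n hn => by rw [subCount_succ k n hn]; push_cast; rfl) (ih (j + 1))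
    convert this using 2
    rw [Finset.prod_Icc_succ_top (by omega), zeta_re (k + 1) (by omega)]
    push_cast
    ring

/-- As `T → ∞`, the number of finite-index subgroups `H ⊆ ℤ^k` with `[ℤ^k : H] ≤ T`
is asymptotic to `ζ(2) ζ(3) ⋯ ζ(k) · T^k / k`, for `k ≥ 1`. -/
theorem stmt3 (k : ℕ) (hk : 1 ≤ k) :
    Tendsto
      (fun T : ℝ =>
        ({H : AddSubgroup (Fin k → ℤ) | 0 < H.index ∧ (H.index : ℝ) ≤ T}.ncard : ℝ) /
          ((∏ i ∈ Finset.Icc 2 k, (riemannZeta (i : ℂ)).re) * T ^ k / k))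
      atTop (nhds 1) := by
  have hC : 0 < ∏ i ∈ Finset.Icc 2 k, (riemannZeta (i : ℂ)).re :=
    Finset.prod_pos fun i hi => zeta_re_pos i (by have := (Finset.mem_Icc.1 hi).1; omega)
  have hk0 : (0 : ℝ) < k := by exact_mod_cast hk
  have h := (main_asymp k hk 0).div_const ((∏ i ∈ Finset.Icc 2 k, (riemannZeta (i : ℂ)).re) / (k : ℝ))
  have h1 : (∏ i ∈ Finset.Icc 2 k, (riemannZeta (i : ℂ)).re) / ((k : ℝ) + (0 : ℕ)) /
      ((∏ i ∈ Finset.Icc 2 k, (riemannZeta (i : ℂ)).re) / (k : ℝ)) = 1 := by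
    rw [Nat.cast_zero, add_zero]
    exact div_self (by positivity)
  rw [h1] at h
  refine h.congr fun T => ?_
  rw [ncard_eq, div_div]
  congr 1
  · simp [wsum]
  · rw [add_zero]; ring
end

section
/- For each prime $p$, $k \ge 1$, and real $s > k$: $\sum_{J} [\mathbb{Z}_p^k : J]^{-s} = \prod_{i=0}^{k-1}(1 - p^{i-s})^{-1}$, where the sum is over all finite-index $\mathbb{Z}_p$-submodules $J \subseteq \mathbb{Z}_p^k$. -/
namespace Stmt15Aux

lemma index_prod {G H : Type*} [AddCommGroup G] [AddCommGroup H] (N : AddSubgroup (G × H)) :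
    N.index = (N.comap (AddMonoidHom.inr G H)).index * (N.map (AddMonoidHom.fst G H)).index := by
  have h1 : (N.comap (AddMonoidHom.inr G H)).index = N.relIndex (AddMonoidHom.fst G H).ker := by
    rw [← AddSubgroup.relIndex_top_right, AddSubgroup.relIndex_comap]
    congr 1
    ext ⟨x, y⟩
    simp [AddSubgroup.mem_prod, eq_comm]
  have h2 : (AddMonoidHom.fst G H).range = ⊤ :=
    AddMonoidHom.range_eq_top.2 Prod.fst_surjective
  rw [AddSubgroup.index_map, h2, AddSubgroup.index_top, mul_one, h1,
    ← AddSubgroup.relIndex_sup_right, sup_comm]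
  exact (AddSubgroup.relIndex_mul_index le_sup_left).symm

variable {p : ℕ} [Fact p.Prime] {M : Type*} [AddCommGroup M] [Module ℤ_[p] M]

lemma index_span (n : ℕ) :
    (Ideal.span {(p : ℤ_[p]) ^ n}).toAddSubgroup.index = p ^ n := by
  rw [← PadicInt.ker_toZModPow]
  have : (RingHom.ker (PadicInt.toZModPow n : ℤ_[p] →+* ZMod (p ^ n))).toAddSubgroup
      = (PadicInt.toZModPow n : ℤ_[p] →+* ZMod (p ^ n)).toAddMonoidHom.ker := by
    ext x; rfl
  rw [this, AddSubgroup.index_ker]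
  have h2 : (PadicInt.toZModPow n : ℤ_[p] →+* ZMod (p ^ n)).toAddMonoidHom.range = ⊤ :=
    AddMonoidHom.range_eq_top.2 (ZMod.ringHom_surjective _)
  rw [h2, Nat.card_congr AddSubgroup.topEquiv.toEquiv, Nat.card_zmod]

/-- The submodule of `ℤ_p × M` attached to `A`, `n` and `v`. -/
def Phi (A : Submodule ℤ_[p] M) (n : ℕ) (v : M ⧸ A) : Submodule ℤ_[p] (ℤ_[p] × M) where
  carrier := {z | ∃ c : ℤ_[p], z.1 = c * (p : ℤ_[p]) ^ n ∧ A.mkQ z.2 = c • v}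
  zero_mem' := ⟨0, by simp⟩
  add_mem' := by
    rintro a b ⟨c, h1, h2⟩ ⟨d, h3, h4⟩
    refine ⟨c + d, ?_, ?_⟩
    · rw [Prod.fst_add, h1, h3, add_mul]
    · rw [Prod.snd_add, map_add, h2, h4, add_smul]
  smul_mem' := by
    rintro r a ⟨c, h1, h2⟩
    refine ⟨r * c, ?_, ?_⟩
    · rw [Prod.smul_fst, h1, smul_eq_mul, mul_assoc]
    · rw [Prod.smul_snd, map_smul, h2, mul_smul]

lemma mem_Phi {A : Submodule ℤ_[p] M} {n : ℕ} {v : M ⧸ A} {z : ℤ_[p] × M} :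
    z ∈ Phi A n v ↔ ∃ c : ℤ_[p], z.1 = c * (p : ℤ_[p]) ^ n ∧ A.mkQ z.2 = c • v := Iff.rfl

lemma ppow_ne (n : ℕ) : (p : ℤ_[p]) ^ n ≠ 0 :=
  pow_ne_zero _ (by exact_mod_cast (Fact.out : p.Prime).ne_zero)

lemma mem_Phi_zero {A : Submodule ℤ_[p] M} {n : ℕ} {v : M ⧸ A} {y : M} :
    ((0 : ℤ_[p]), y) ∈ Phi A n v ↔ y ∈ A := by
  rw [mem_Phi]
  constructor
  · rintro ⟨c, h1, h2⟩
    have : c = 0 := by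
      rcases mul_eq_zero.1 h1.symm with h | h
      · exact h
      · exact absurd h (ppow_ne n)
    subst this
    simpa using h2
  · intro h
    exact ⟨0, by simp, by simpa using h⟩

lemma index_Phi (A : Submodule ℤ_[p] M) (n : ℕ) (v : M ⧸ A) :
    (Phi A n v).toAddSubgroup.index = A.toAddSubgroup.index * p ^ n := by
  rw [index_prod]
  have h1 : (Phi A n v).toAddSubgroup.comap (AddMonoidHom.inr ℤ_[p] M) = A.toAddSubgroup := by
    ext y
    exact mem_Phi_zero
  have h2 : (Phi A n v).toAddSubgroup.map (AddMonoidHom.fst ℤ_[p] M)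
      = (Ideal.span {(p : ℤ_[p]) ^ n}).toAddSubgroup := by
    ext x
    rw [AddSubgroup.mem_map]
    change _ ↔ x ∈ Ideal.span {(p : ℤ_[p]) ^ n}
    rw [Ideal.mem_span_singleton']
    constructor
    · rintro ⟨z, ⟨c, h1, h2⟩, rfl⟩
      exact ⟨c, h1.symm⟩
    · rintro ⟨c, rfl⟩
      obtain ⟨w, hw⟩ := A.mkQ_surjective (c • v)
      exact ⟨(c * (p : ℤ_[p]) ^ n, w), ⟨c, rfl, hw⟩, rfl⟩
  rw [h1, h2, index_span]

/-- Uncurried version of `Phi`. -/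
def Psi (t : Σ A : Submodule ℤ_[p] M, ℕ × (M ⧸ A)) : Submodule ℤ_[p] (ℤ_[p] × M) :=
  Phi t.1 t.2.1 t.2.2

lemma Psi_injective : Function.Injective (Psi (p := p) (M := M)) := by
  rintro ⟨A, n, v⟩ ⟨B, m, w⟩ h
  change Phi A n v = Phi B m w at h
  have hAB : A = B := by
    ext y
    rw [← mem_Phi_zero (n := n) (v := v), h, mem_Phi_zero]
  subst hAB
  have key : ∀ (n m : ℕ) (v w : M ⧸ A), Phi A n v = Phi A m w →
      ∃ c : ℤ_[p], (p : ℤ_[p]) ^ n = c * (p : ℤ_[p]) ^ m ∧ v = c • w := by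
    intro n m v w h
    obtain ⟨x, rfl⟩ := A.mkQ_surjective v
    have : ((p : ℤ_[p]) ^ n, x) ∈ Phi A n (A.mkQ x) := ⟨1, by simp, by simp⟩
    rw [h] at this
    exact this
  have hp : ¬ IsUnit (p : ℤ_[p]) := PadicInt.prime_p.not_isUnit
  have h0 : (p : ℤ_[p]) ≠ 0 := PadicInt.prime_p.ne_zero
  obtain ⟨c, h1, h2⟩ := key _ _ _ _ h
  obtain ⟨d, h3, h4⟩ := key _ _ _ _ h.symm
  have hmn : m ≤ n := (pow_dvd_pow_iff h0 hp).1 ⟨c, by rw [h1, mul_comm]⟩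
  have hnm : n ≤ m := (pow_dvd_pow_iff h0 hp).1 ⟨d, by rw [h3, mul_comm]⟩
  obtain rfl := le_antisymm hmn hnm
  have hc : c = 1 := mul_right_cancel₀ (ppow_ne m) (by rw [← h1, one_mul])
  subst hc
  rw [one_smul] at h2
  rw [h2]

lemma mem_range_Psi (J : Submodule ℤ_[p] (ℤ_[p] × M)) (hJ : J.toAddSubgroup.index ≠ 0) :
    J ∈ Set.range (Psi (p := p) (M := M)) := by
  set I : Ideal ℤ_[p] := J.map (LinearMap.fst ℤ_[p] ℤ_[p] M) with hI
  have hidx : I.toAddSubgroup.index ≠ 0 := by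
    rw [index_prod] at hJ
    have h2 : J.toAddSubgroup.map (AddMonoidHom.fst ℤ_[p] M) = I.toAddSubgroup := by
      ext x; rfl
    rw [h2] at hJ
    exact right_ne_zero_of_mul hJ
  have hbot : I ≠ ⊥ := by
    intro h
    rw [h] at hidx
    apply hidx
    have : (⊥ : Ideal ℤ_[p]).toAddSubgroup = ⊥ := by ext x; simp
    rw [this, AddSubgroup.index_bot]
    exact Nat.card_eq_zero_of_infinite
  obtain ⟨n, hn⟩ := PadicInt.ideal_eq_span_pow_p hbot
  have hmem : (p : ℤ_[p]) ^ n ∈ I := by rw [hn]; exact Ideal.mem_span_singleton_self _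
  obtain ⟨⟨a, w⟩, hw, ha⟩ := hmem
  change a = _ at ha
  subst ha
  set A : Submodule ℤ_[p] M := J.comap (LinearMap.inr ℤ_[p] ℤ_[p] M) with hA
  have key : ∀ (c : ℤ_[p]) (y : M), (c * (p : ℤ_[p]) ^ n, y) ∈ J ↔ A.mkQ y = c • A.mkQ w := by
    intro c y
    rw [← map_smul, ← sub_eq_zero, ← map_sub, Submodule.mkQ_apply, Submodule.Quotient.mk_eq_zero]
    change _ ↔ ((0 : ℤ_[p]), y - c • w) ∈ J
    have h : (c * (p : ℤ_[p]) ^ n, y) = ((0 : ℤ_[p]), y - c • w) + c • ((p : ℤ_[p]) ^ n, w) := by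
      ext <;> simp
    rw [h]
    exact J.add_mem_iff_left (J.smul_mem c hw)
  refine ⟨⟨A, n, A.mkQ w⟩, ?_⟩
  ext ⟨x, y⟩
  change (x, y) ∈ Phi A n (A.mkQ w) ↔ _
  rw [mem_Phi]
  constructor
  · rintro ⟨c, h1, h2⟩
    change x = _ at h1
    subst h1
    exact (key c y).2 h2
  · intro h
    have hx : x ∈ I := ⟨(x, y), h, rfl⟩
    rw [hn, Ideal.mem_span_singleton'] at hx
    obtain ⟨c, rfl⟩ := hx
    exact ⟨c, rfl, (key c y).1 h⟩

/-- The zeta function with values in extended nonnegative reals. -/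
noncomputable def Z (p : ℕ) [Fact p.Prime] (M : Type*) [AddCommGroup M] [Module ℤ_[p] M]
    (s : ℝ) : ENNReal :=
  ∑' J : Submodule ℤ_[p] M, ENNReal.ofReal ((J.toAddSubgroup.index : ℝ) ^ (-s))

lemma Z_prod (s : ℝ) (hs : 1 < s) :
    Z p (ℤ_[p] × M) s = ENNReal.ofReal ((1 - (p : ℝ) ^ (-s))⁻¹) * Z p M (s - 1) := by
  have hp1 : (1 : ℝ) < p := by exact_mod_cast (Fact.out : p.Prime).one_lt
  have hlt : (p : ℝ) ^ (-s) < 1 := Real.rpow_lt_one_of_one_lt_of_neg hp1 (by linarith)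
  have hgeo : ∑' n : ℕ, ENNReal.ofReal (((p : ℝ) ^ n) ^ (-s))
      = ENNReal.ofReal ((1 - (p : ℝ) ^ (-s))⁻¹) := by
    have h1 : ∀ n : ℕ, ENNReal.ofReal (((p : ℝ) ^ n) ^ (-s))
        = ENNReal.ofReal ((p : ℝ) ^ (-s)) ^ n := by
      intro n
      rw [← ENNReal.ofReal_pow (by positivity)]
      congr 1
      rw [← Real.rpow_natCast, ← Real.rpow_natCast, ← Real.rpow_mul (by positivity),
        ← Real.rpow_mul (by positivity), mul_comm]
    simp_rw [h1]
    rw [ENNReal.tsum_geometric, ENNReal.ofReal_inv_of_pos (by linarith),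
      ENNReal.ofReal_sub _ (by positivity), ENNReal.ofReal_one]
  have hsupp : Function.support (fun J : Submodule ℤ_[p] (ℤ_[p] × M) =>
      ENNReal.ofReal ((J.toAddSubgroup.index : ℝ) ^ (-s))) ⊆ Set.range (Psi (p := p) (M := M)) := by
    intro J hJ
    apply mem_range_Psi
    intro h
    apply hJ
    simp only [h, Nat.cast_zero]
    rw [Real.zero_rpow (by linarith), ENNReal.ofReal_zero]
  unfold Z
  rw [← Psi_injective.tsum_eq hsupp, ENNReal.tsum_sigma', ← ENNReal.tsum_mul_left]
  congr 1
  ext A : 1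
  simp only [Psi]
  rw [ENNReal.tsum_prod (f := fun n v => ENNReal.ofReal (((Phi A n v).toAddSubgroup.index : ℝ) ^ (-s))),
    ← hgeo, ← ENNReal.tsum_mul_right]
  congr 1
  ext n : 1
  simp only [index_Phi]
  rw [ENNReal.tsum_const, Nat.cast_mul, Nat.cast_pow, Real.mul_rpow (by positivity) (by positivity),
    mul_comm (_ ^ (-s)) (_ ^ (-s)), ENNReal.ofReal_mul (by positivity), mul_left_comm]
  congr 1
  have hcard : A.toAddSubgroup.index = Nat.card (M ⧸ A) := rfl
  by_cases h : A.toAddSubgroup.index = 0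
  · rw [h, Nat.cast_zero, Real.zero_rpow (by linarith), Real.zero_rpow (by linarith)]
    simp
  · have hfin : Finite (M ⧸ A) := Nat.finite_of_card_ne_zero (hcard ▸ h)
    have hpos : (0 : ℝ) < A.toAddSubgroup.index := by exact_mod_cast Nat.pos_of_ne_zero h
    have hE : ENat.card (M ⧸ A) = (A.toAddSubgroup.index : ℕ) := by
      rw [hcard, ENat.card_eq_coe_natCard]
    rw [hE, ENat.toENNReal_coe, ← ENNReal.ofReal_natCast, ← ENNReal.ofReal_mul (by positivity)]
    congr 1
    rw [show -(s - 1) = 1 + -s by ring, Real.rpow_add hpos, Real.rpow_one]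

lemma Z_congr {N : Type*} [AddCommGroup N] [Module ℤ_[p] N] (e : M ≃ₗ[ℤ_[p]] N) (s : ℝ) :
    Z p M s = Z p N s := by
  unfold Z
  rw [← (Submodule.orderIsoMapComap e).toEquiv.tsum_eq]
  congr 1
  ext J : 1
  congr 3
  exact (AddSubgroup.index_map_equiv J.toAddSubgroup e.toAddEquiv).symm

lemma Z_pi (k : ℕ) : ∀ s : ℝ, (k : ℝ) < s → Z p (Fin k → ℤ_[p]) s =
    ENNReal.ofReal (∏ i ∈ Finset.range k, (1 - (p : ℝ) ^ ((i : ℝ) - s))⁻¹) := by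
  induction k with
  | zero =>
    intro s hs
    unfold Z
    rw [tsum_eq_single ⊥ (fun J hJ => absurd (Subsingleton.elim J ⊥) hJ)]
    have : (⊥ : Submodule ℤ_[p] (Fin 0 → ℤ_[p])).toAddSubgroup = ⊤ := by
      ext x; simpa using Subsingleton.elim x 0
    rw [this]
    simp
  | succ k ih =>
    intro s hs
    push_cast at hs
    have hp1 : (1 : ℝ) < p := by exact_mod_cast (Fact.out : p.Prime).one_lt
    have hk0 : (0 : ℝ) ≤ k := k.cast_nonneg
    have hlt : (p : ℝ) ^ (-s) < 1 := Real.rpow_lt_one_of_one_lt_of_neg hp1 (by linarith)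
    rw [← Z_congr (Fin.consLinearEquiv ℤ_[p] (fun _ : Fin (k + 1) => ℤ_[p])) s,
      Z_prod s (by linarith), ih (s - 1) (by linarith),
      ← ENNReal.ofReal_mul (inv_nonneg.2 (by linarith)), Finset.prod_range_succ', mul_comm]
    congr 2
    · refine Finset.prod_congr rfl fun i _ => ?_
      congr 3
      push_cast
      ring
    · simp

end Stmt15Aux

/-- For each prime `p`, `k ≥ 1`, and real `s > k`:
`∑_J [ℤ_p^k : J]^{-s} = ∏_{i=0}^{k-1} (1 - p^{i-s})⁻¹`, the sum being over all
finite-index `ℤ_p`-submodules `J ⊆ ℤ_p^k` (submodules of infinite index have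
`index = 0` and contribute `0^{-s} = 0`). -/
theorem stmt15 (p k : ℕ) [Fact p.Prime] (hk : 1 ≤ k) (s : ℝ) (hs : (k : ℝ) < s) :
    ∑' J : Submodule ℤ_[p] (Fin k → ℤ_[p]),
        ((J.toAddSubgroup.index : ℝ) ^ (-s)) =
      ∏ i ∈ Finset.range k, (1 - (p : ℝ) ^ ((i : ℝ) - s))⁻¹ := by
  have h := congrArg ENNReal.toReal (Stmt15Aux.Z_pi (p := p) k s hs)
  have hp1 : (1 : ℝ) < p := by exact_mod_cast (Fact.out : p.Prime).one_lt
  rw [ENNReal.toReal_ofReal, Stmt15Aux.Z, ENNReal.tsum_toReal_eq (fun _ => ENNReal.ofReal_ne_top)]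
    at h
  · rw [← h]
    congr 1
    ext J : 1
    rw [ENNReal.toReal_ofReal (by positivity)]
  · refine Finset.prod_nonneg fun i hi => inv_nonneg.2 ?_
    have hik : (i : ℝ) < k := by exact_mod_cast Finset.mem_range.1 hi
    have := Real.rpow_lt_one_of_one_lt_of_neg hp1 (show (i : ℝ) - s < 0 by linarith)
    linarith
end

section
/- For each prime $p$ and $k \ge 1$: $\left(\sum_{J \subseteq \mathbb{Z}_p^k} [\mathbb{Z}_p^k:J]^{-k}\right) \cdot (1-p^{-1})(1-p^{-2})\cdots(1-p^{-k}) = 1$, where the sum is over finite-index $\mathbb{Z}_p$-submodules $J$. -/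
open scoped ENNReal

namespace Stmt16

variable {p : ℕ} [Fact p.Prime]

theorem index_prod {R M : Type*} [CommRing R] [AddCommGroup M] [Module R M]
    (J : Submodule R (R × M)) :
    J.toAddSubgroup.index = (J.map (LinearMap.fst R R M)).toAddSubgroup.index *
      (J.comap (LinearMap.inr R R M)).toAddSubgroup.index := by
  have h1 := AddSubgroup.index_map J.toAddSubgroup (AddMonoidHom.fst R M)
  have h2 : (AddMonoidHom.fst R M).range = ⊤ :=
    AddMonoidHom.range_eq_top.2 Prod.fst_surjective
  rw [h2, AddSubgroup.index_top, mul_one] at h1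
  have h3 : (J.map (LinearMap.fst R R M)).toAddSubgroup =
      J.toAddSubgroup.map (AddMonoidHom.fst R M) := rfl
  have h4 : (J.comap (LinearMap.inr R R M)).toAddSubgroup =
      J.toAddSubgroup.comap (AddMonoidHom.inr R M) := rfl
  have h5 : (AddMonoidHom.inr R M).range = (AddMonoidHom.fst R M).ker := by
    ext ⟨r, m⟩
    simp [AddSubgroup.mem_prod, eq_comm]
  rw [h3, h4, h1, AddSubgroup.index_comap, h5, ← AddSubgroup.relIndex_sup_left, mul_comm,
    AddSubgroup.relIndex_mul_index le_sup_left]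

theorem index_span (a : ℕ) :
    (Submodule.toAddSubgroup (Ideal.span {(p : ℤ_[p]) ^ a})).index = p ^ a := by
  have h : Submodule.toAddSubgroup (Ideal.span {(p : ℤ_[p]) ^ a}) =
      (PadicInt.toZModPow a : ℤ_[p] →+* ZMod (p ^ a)).toAddMonoidHom.ker := by
    ext x
    rw [← PadicInt.ker_toZModPow]
    rfl
  rw [h, AddSubgroup.index_ker]
  have h2 : (PadicInt.toZModPow a : ℤ_[p] →+* ZMod (p ^ a)).toAddMonoidHom.range = ⊤ :=
    AddMonoidHom.range_eq_top.2 (ZMod.ringHom_surjective _)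
  rw [h2]
  simp

variable {M : Type*} [AddCommGroup M] [Module ℤ_[p] M]

/-- The finite-index submodules. -/
abbrev FI (p : ℕ) [Fact p.Prime] (M : Type*) [AddCommGroup M] [Module ℤ_[p] M] :=
  {J : Submodule ℤ_[p] M // J.toAddSubgroup.index ≠ 0}

/-- The submodule attached to the data. -/
noncomputable def mk (a : ℕ) (J : Submodule ℤ_[p] M) (c : M ⧸ J) : Submodule ℤ_[p] (ℤ_[p] × M) :=
  (Submodule.span ℤ_[p] {((p : ℤ_[p]) ^ a, c)}).comap
    (LinearMap.prodMap LinearMap.id J.mkQ)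

theorem mem_mk (a : ℕ) (J : Submodule ℤ_[p] M) (c : M ⧸ J) (r : ℤ_[p]) (m : M) :
    (r, m) ∈ mk a J c ↔ ∃ s : ℤ_[p], s * (p : ℤ_[p]) ^ a = r ∧ s • c = J.mkQ m := by
  simp [mk, Submodule.mem_span_singleton]

theorem p_ne (a : ℕ) : (p : ℤ_[p]) ^ a ≠ 0 :=
  pow_ne_zero _ (by exact_mod_cast (Fact.out : p.Prime).ne_zero)

theorem map_mk (a : ℕ) (J : Submodule ℤ_[p] M) (c : M ⧸ J) :
    (mk a J c).map (LinearMap.fst ℤ_[p] ℤ_[p] M) = Ideal.span {(p : ℤ_[p]) ^ a} := by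
  ext r
  rw [Ideal.mem_span_singleton']
  constructor
  · rintro ⟨⟨r', m⟩, h, rfl⟩
    obtain ⟨s, hs, -⟩ := (mem_mk a J c r' m).1 h
    exact ⟨s, hs⟩
  · rintro ⟨s, hs⟩
    obtain ⟨m, hm⟩ := J.mkQ_surjective (s • c)
    exact ⟨(r, m), (mem_mk a J c r m).2 ⟨s, hs, hm.symm⟩, rfl⟩

theorem comap_mk (a : ℕ) (J : Submodule ℤ_[p] M) (c : M ⧸ J) :
    (mk a J c).comap (LinearMap.inr ℤ_[p] ℤ_[p] M) = J := by
  ext m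
  rw [Submodule.mem_comap, LinearMap.inr_apply, mem_mk]
  constructor
  · rintro ⟨s, hs, h⟩
    have : s = 0 := (mul_eq_zero.1 hs).resolve_right (p_ne a)
    subst this
    rw [zero_smul, eq_comm] at h
    simpa using h
  · intro h
    refine ⟨0, by simp, ?_⟩
    rw [zero_smul, eq_comm]
    simpa using h

theorem index_mk (a : ℕ) (J : Submodule ℤ_[p] M) (c : M ⧸ J) :
    (mk a J c).toAddSubgroup.index = p ^ a * J.toAddSubgroup.index := by
  rw [index_prod, map_mk, comap_mk, index_span]

/-- The parametrization. -/
noncomputable def param (d : ℕ × (Σ J : FI p M, M ⧸ J.1)) : FI p (ℤ_[p] × M) :=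
  ⟨mk d.1 d.2.1.1 d.2.2, by
    rw [index_mk]
    exact mul_ne_zero (pow_ne_zero _ (Fact.out : p.Prime).ne_zero) d.2.1.2⟩

theorem param_inj : Function.Injective (param (p := p) (M := M)) := by
  rintro ⟨a, ⟨J, hJ⟩, c⟩ ⟨a', ⟨J', hJ'⟩, c'⟩ h
  have h : mk a J c = mk a' J' c' := congrArg Subtype.val h
  have hJJ : J = J' := by rw [← comap_mk a J c, h, comap_mk]
  subst hJJ
  have ha : p ^ a = p ^ a' := by rw [← index_span, ← map_mk a J c, h, map_mk, index_span]
  have ha := Nat.pow_right_injective (Fact.out : p.Prime).two_le ha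
  subst ha
  obtain ⟨m, hm⟩ := J.mkQ_surjective c
  have h1 : ((p : ℤ_[p]) ^ a, m) ∈ mk a J c := (mem_mk _ _ _ _ _).2 ⟨1, by simp, by simp [hm]⟩
  rw [h] at h1
  obtain ⟨s, hs, hc⟩ := (mem_mk _ _ _ _ _).1 h1
  have : s = 1 := mul_right_cancel₀ (p_ne a) (by rw [hs, one_mul])
  subst this
  rw [one_smul, hm] at hc
  subst hc
  rfl

theorem param_surj : Function.Surjective (param (p := p) (M := M)) := by
  rintro ⟨J, hJ⟩
  have h := hJ
  rw [index_prod] at h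
  have h1 := left_ne_zero_of_mul h
  have h2 := right_ne_zero_of_mul h
  have h3 : J.map (LinearMap.fst ℤ_[p] ℤ_[p] M) ≠ ⊥ := by
    intro h4
    rw [h4] at h1
    apply h1
    change (⊥ : AddSubgroup ℤ_[p]).index = 0
    rw [AddSubgroup.index_bot]
    exact Nat.card_eq_zero_of_infinite
  obtain ⟨a, ha⟩ := PadicInt.ideal_eq_span_pow_p h3
  have h5 : (p : ℤ_[p]) ^ a ∈ J.map (LinearMap.fst ℤ_[p] ℤ_[p] M) := by
    rw [ha]; exact Ideal.mem_span_singleton_self _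
  obtain ⟨⟨r, m⟩, hm, hr⟩ := h5
  change r = _ at hr
  subst hr
  refine ⟨⟨a, ⟨_, h2⟩, Submodule.mkQ _ m⟩, Subtype.ext ?_⟩
  change mk _ _ _ = J
  ext ⟨r, n⟩
  rw [mem_mk]
  have key : ∀ s : ℤ_[p], s • Submodule.mkQ (J.comap (LinearMap.inr ℤ_[p] ℤ_[p] M)) m =
      Submodule.mkQ _ n ↔ (s * (p : ℤ_[p]) ^ a, n) ∈ J := by
    intro s
    rw [← map_smul, eq_comm, ← sub_eq_zero, ← map_sub, ← LinearMap.mem_ker, Submodule.ker_mkQ,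
      Submodule.mem_comap]
    have : (s * (p : ℤ_[p]) ^ a, n) =
      LinearMap.inr ℤ_[p] ℤ_[p] M (n - s • m) + s • ((p : ℤ_[p]) ^ a, m) := by simp
    rw [this]
    exact (Submodule.add_mem_iff_left J (J.smul_mem s hm)).symm
  constructor
  · rintro ⟨s, rfl, h⟩
    exact (key s).1 h
  · intro h
    have : r ∈ J.map (LinearMap.fst ℤ_[p] ℤ_[p] M) := ⟨_, h, rfl⟩
    rw [ha, Ideal.mem_span_singleton'] at this
    obtain ⟨s, rfl⟩ := this
    exact ⟨s, rfl, (key s).2 h⟩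

/-- The zeta value. -/
noncomputable def Z (p : ℕ) [Fact p.Prime] (M : Type*) [AddCommGroup M] [Module ℤ_[p] M]
    (n : ℕ) : ℝ≥0∞ :=
  ∑' J : FI p M, ((J.1.toAddSubgroup.index : ℝ≥0∞) ^ n)⁻¹

theorem param_bij : Function.Bijective (param (p := p) (M := M)) := ⟨param_inj, param_surj⟩

theorem Z_prod (n : ℕ) :
    Z p (ℤ_[p] × M) (n + 1) = (1 - ((p : ℝ≥0∞) ^ (n + 1))⁻¹)⁻¹ * Z p M n := by
  have hp : (p : ℝ≥0∞) ≠ 0 := by exact_mod_cast (Fact.out : p.Prime).ne_zero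
  rw [Z, ← (Equiv.ofBijective _ (param_bij (p := p) (M := M))).tsum_eq,
    ENNReal.tsum_prod', ← ENNReal.tsum_geometric, ← ENNReal.tsum_mul_right]
  refine tsum_congr fun a => ?_
  rw [Z, ← ENNReal.tsum_mul_left, ENNReal.tsum_sigma']
  refine tsum_congr fun J => ?_
  have hJ : (J.1.toAddSubgroup.index : ℝ≥0∞) ≠ 0 := by exact_mod_cast J.2
  have h : ∀ c : M ⧸ J.1, (((param (p := p) (a, ⟨J, c⟩)).1.toAddSubgroup.index : ℝ≥0∞) ^ (n+1))⁻¹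
      = (((p : ℝ≥0∞) ^ (n + 1))⁻¹) ^ a *
        ((J.1.toAddSubgroup.index : ℝ≥0∞) ^ (n + 1))⁻¹ := by
    intro c
    change (((mk a J.1 c).toAddSubgroup.index : ℝ≥0∞) ^ (n+1))⁻¹ = _
    rw [index_mk]
    push_cast
    rw [mul_pow, ENNReal.mul_inv (by simp [hp]) (by simp [hJ]), ← ENNReal.inv_pow, ← pow_mul,
      ← pow_mul, mul_comm a]
  simp only [Equiv.ofBijective_apply, h]
  have hfin : Finite (M ⧸ J.1) := Nat.finite_of_card_ne_zero J.2
  rw [ENNReal.tsum_const, mul_left_comm]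
  congr 1
  have hc : (ENat.card (M ⧸ J.1) : ℝ≥0∞) = J.1.toAddSubgroup.index := by
    rw [ENat.card_eq_coe_natCard]; rfl
  rw [hc, pow_succ, ENNReal.mul_inv (by simp [hJ]) (by simp [hJ]), mul_left_comm,
    ENNReal.mul_inv_cancel hJ (by simp), mul_one]

theorem Z_congr {N : Type*} [AddCommGroup N] [Module ℤ_[p] N] (e : M ≃ₗ[ℤ_[p]] N) (n : ℕ) :
    Z p M n = Z p N n := by
  have hi : ∀ J : Submodule ℤ_[p] N,
      (J.comap (e : M →ₗ[ℤ_[p]] N)).toAddSubgroup.index = J.toAddSubgroup.index := fun J =>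
    AddSubgroup.index_comap_of_surjective J.toAddSubgroup
      (f := ((e : M →ₗ[ℤ_[p]] N) : M →+ N)) e.surjective
  let E : FI p N ≃ FI p M := (Submodule.orderIsoMapComap e).symm.toEquiv.subtypeEquiv (by
    intro J
    exact (not_congr (by rw [← hi J]; rfl)))
  rw [Z, Z, ← E.tsum_eq]
  refine tsum_congr fun J => ?_
  rw [← hi J.1]
  rfl

theorem Z_eq (k : ℕ) : Z p (Fin k → ℤ_[p]) k =
    ∏ i ∈ Finset.Icc 1 k, (1 - ((p : ℝ≥0∞) ^ i)⁻¹)⁻¹ := by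
  induction k with
  | zero =>
    have h : ∀ J : Submodule ℤ_[p] (Fin 0 → ℤ_[p]), J.toAddSubgroup.index ≠ 0 := by
      intro J
      rw [Subsingleton.elim J.toAddSubgroup ⊤]; simp
    have : Unique (FI p (Fin 0 → ℤ_[p])) := ⟨⟨⟨⊤, h _⟩⟩, fun J => Subtype.ext (Subsingleton.elim _ _)⟩
    simp [Z]
  | succ k ih =>
    rw [← Z_congr (Fin.consLinearEquiv ℤ_[p] (fun _ : Fin (k+1) => ℤ_[p])), Z_prod, ih,
      Finset.prod_Icc_succ_top (by omega), mul_comm]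

end Stmt16

open Stmt16 in
/-- For each prime `p` and `k ≥ 1`:
`(∑_J [ℤ_p^k : J]^{-k}) · (1 - p⁻¹)(1 - p⁻²) ⋯ (1 - p⁻ᵏ) = 1`, the sum being over all
finite-index `ℤ_p`-submodules `J ⊆ ℤ_p^k` (submodules of infinite index have
`index = 0` and contribute `0`). -/
theorem stmt16 (p k : ℕ) [Fact p.Prime] (hk : 1 ≤ k) :
    (∑' J : Submodule ℤ_[p] (Fin k → ℤ_[p]),
        ((J.toAddSubgroup.index : ℝ) ^ (-(k : ℤ)))) *
      ∏ i ∈ Finset.Icc 1 k, (1 - (p : ℝ) ^ (-(i : ℤ))) = 1 := by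
  have h1 : (∑' J : Submodule ℤ_[p] (Fin k → ℤ_[p]),
        ((J.toAddSubgroup.index : ℝ) ^ (-(k : ℤ)))) = (Z p (Fin k → ℤ_[p]) k).toReal := by
    rw [Z, ENNReal.tsum_toReal_eq]
    · rw [← tsum_subtype_eq_of_support_subset
        (s := {J : Submodule ℤ_[p] (Fin k → ℤ_[p]) | J.toAddSubgroup.index ≠ 0})]
      · refine tsum_congr fun J => ?_
        simp
      · intro J hJ h0
        apply hJ
        simp only [h0]
        simp
        omega
    · intro J
      have := J.2
      simpa using fun h => absurd h this
  have hp1 : (1 : ℝ) < p := by exact_mod_cast (Fact.out : p.Prime).one_lt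
  rw [h1, Z_eq, ENNReal.toReal_prod, ← Finset.prod_mul_distrib]
  refine Finset.prod_eq_one fun i hi => ?_
  have hi : i ≠ 0 := by have := (Finset.mem_Icc.1 hi).1; omega
  have h2 : (p : ℝ) ^ (-(i : ℤ)) < 1 := by
    rw [zpow_neg, zpow_natCast]
    exact inv_lt_one_of_one_lt₀ (one_lt_pow₀ hp1 hi)
  have h3 : ((1 - ((p : ℝ≥0∞) ^ i)⁻¹)⁻¹).toReal = (1 - (p : ℝ) ^ (-(i : ℤ)))⁻¹ := by
    rw [ENNReal.toReal_inv, ENNReal.toReal_sub_of_le _ (by simp)]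
    · simp
    · rw [ENNReal.inv_le_one]
      exact one_le_pow₀ (by exact_mod_cast (Fact.out : p.Prime).one_le)
  rw [h3]
  exact inv_mul_cancel₀ (by linarith)
end
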